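/- Let u(z) = Σ_{k=2}^∞ zᵏ/(k (log k)^{3/4}) and φ(z) = (1 − z)/2 for z in the unit disc 𝔻. Then u ∈ 𝒟 and the weighted composition operator W_{u,φ} : f ↦ u·(f∘φ) is bounded on the Dirichlet space 𝒟. -/

import Mathlib

open Complex MeasureTheory Metric Set Filter

noncomputable section

/-- The open unit disc in the complex plane. -/
def unitDisc : Set ℂ := Metric.ball 0 1

/-- The square of the Dirichlet norm:
`‖f‖²_𝒟 = |f(0)|² + ∫_𝔻 |f′(z)|² dA(z)`, with `A` normalized area measure. -/
def dirNormSq (f : ℂ → ℂ) : ℝ :=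
  ‖f 0‖ ^ 2 + (1 / Real.pi) * ∫ z in unitDisc, ‖deriv f z‖ ^ 2

/-- Membership in the Dirichlet space `𝒟`: `f` is holomorphic on `𝔻` and
`|f′|²` is integrable over `𝔻`. -/
def MemDirichlet (f : ℂ → ℂ) : Prop :=
  DifferentiableOn ℂ f unitDisc ∧
    IntegrableOn (fun z : ℂ => ‖deriv f z‖ ^ 2) unitDisc

/-- The weighted composition operator `W_{u,φ} : f ↦ u·(f∘φ)` is bounded
on the Dirichlet space: there is a constant `C` with
`‖u·(f∘φ)‖²_𝒟 ≤ C ‖f‖²_𝒟` (and `u·(f∘φ) ∈ 𝒟`) for all `f ∈ 𝒟`. -/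
def WCOBounded (u φ : ℂ → ℂ) : Prop :=
  ∃ C : ℝ, 0 ≤ C ∧ ∀ f : ℂ → ℂ, MemDirichlet f →
    MemDirichlet (fun z => u z * f (φ z)) ∧
      dirNormSq (fun z => u z * f (φ z)) ≤ C * dirNormSq f

/-- The function `u(z) = Σ_{k=2}^∞ zᵏ/(k (log k)^{3/4})`. -/
def uLog : ℂ → ℂ := fun z =>
  ∑' k : ℕ, z ^ (k + 2) /
    (((k : ℂ) + 2) * ((Real.log ((k : ℝ) + 2)) ^ ((3 : ℝ) / 4) : ℝ))

/-- The self-map `φ(z) = (1 − z)/2` of the unit disc. -/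
def phiHalf : ℂ → ℂ := fun z => (1 - z) / 2

/-! If `|φ| ≤ ρ < 1` at `z`, the point evaluations `f ↦ f (φ z)` and `f ↦ f' (φ z)` are bounded on
`𝒟` uniformly in `z`; hence `W_{u,φ}` is bounded as soon as `u ∈ 𝒟`, composition with `φ` is bounded
on `𝒟`, and at each `z` either `u, u'` are bounded by a fixed constant or `|φ| ≤ ρ` and `φ'` is
bounded. Point evaluations are controlled by Parseval's formula
`∫_{|z|<R} |∑ aₙ zⁿ|² = π ∑ |aₙ|² R²ⁿ⁺² / (n+1)` and Cauchy–Schwarz, and composition with the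
injective map `φ(z) = (1 - z)/2` by a change of variables.

Here `u'(z) = z ∑ zᵏ (log (k+2))^{-3/4}`, which is square integrable because
`∑ 1 / (k (log k)^{3/2})` converges. The coefficients decrease, so summation by parts bounds
`|(1 - z) u'(z)|`: the only singularity of `u` is at `z = 1`, where `φ` vanishes. On `Re z ≤ 0` both
`u` and `u'` are bounded, and on `Re z ≥ 0` one has `|φ| ≤ 3/4`. -/

open scoped Real ENNReal

/-! ### Parseval's formula -/

section Parseval

theorem sum_sq_norm_mul_pow_eq_circleAverage (a : ℕ → ℂ) (r : ℝ) (s : Finset ℕ) :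
    ∑ n ∈ s, ‖a n‖ ^ 2 * r ^ (2 * n) =
      Real.circleAverage (fun z => ‖∑ n ∈ s, a n * z ^ n‖ ^ 2) 0 r := by
  set p : Polynomial ℂ := ∑ n ∈ s, Polynomial.monomial n (a n * (r : ℂ) ^ n) with hp
  have hcoeff (n : ℕ) : p.coeff n = if n ∈ s then a n * (r : ℂ) ^ n else 0 := by
    simp [hp, Polynomial.finsetSum_coeff, Polynomial.coeff_monomial]
  have hsupport : p.support ⊆ s := fun n hn => by
    by_contra hns
    exact Polynomial.mem_support_iff.1 hn (by rw [hcoeff, if_neg hns])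
  have heval (z : ℂ) : p.eval z = ∑ n ∈ s, a n * (r * z + 0) ^ n := by
    simp [hp, Polynomial.eval_finsetSum, mul_pow, mul_assoc]
  rw [Real.circleAverage_eq_circleAverage_zero_one]
  simp_rw [← heval]
  rw [← p.sum_sq_norm_coeff_eq_circleAverage]
  refine (Finset.sum_subset hsupport fun n _ hn => ?_).trans
    (Finset.sum_congr rfl fun n hn => ?_) |>.symm
  · simp [Polynomial.notMem_support_iff.1 hn]
  · rw [hcoeff, if_pos hn, norm_mul, norm_pow, norm_real, mul_pow, ← pow_mul, mul_comm n 2,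
      pow_mul, Real.norm_eq_abs, sq_abs, ← pow_mul]

variable {a : ℕ → ℂ} {g : ℂ → ℂ}

theorem summable_norm_mul_abs_pow_of_hasSum_sphere {r : ℝ}
    (hg : ∀ z ∈ sphere (0 : ℂ) |r|, HasSum (fun n => a n * z ^ n) (g z)) :
    Summable fun n => ‖a n‖ * |r| ^ n := by
  simpa using (hg (r : ℂ) (by simp)).summable.norm

theorem continuous_comp_circleMap_of_hasSum {r : ℝ}
    (hg : ∀ z ∈ sphere (0 : ℂ) |r|, HasSum (fun n => a n * z ^ n) (g z)) :
    Continuous fun θ => g (circleMap 0 r θ) := by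
  have heq : (fun θ => g (circleMap 0 r θ)) = fun θ => ∑' n, a n * circleMap 0 r θ ^ n :=
    funext fun θ => (hg _ (circleMap_mem_sphere' 0 r θ)).tsum_eq.symm
  rw [heq]
  refine continuous_tsum (fun n => by fun_prop) (summable_norm_mul_abs_pow_of_hasSum_sphere hg)
    fun n θ => ?_
  simp

theorem hasSum_sq_norm_circleAverage {r : ℝ}
    (hg : ∀ z ∈ sphere (0 : ℂ) |r|, HasSum (fun n => a n * z ^ n) (g z)) :
    HasSum (fun n => ‖a n‖ ^ 2 * r ^ (2 * n))
      (Real.circleAverage (fun z => ‖g z‖ ^ 2) 0 r) := by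
  have hsummable := summable_norm_mul_abs_pow_of_hasSum_sphere hg
  have hbound (s : Finset ℕ) (θ : ℝ) :
      ‖‖∑ n ∈ s, a n * circleMap 0 r θ ^ n‖ ^ 2‖ ≤ (∑' n, ‖a n‖ * |r| ^ n) ^ 2 := by
    rw [norm_pow, norm_norm]
    gcongr
    refine (norm_sum_le _ _).trans ?_
    simpa using hsummable.sum_le_tsum s fun n _ => by positivity
  simp only [HasSum, sum_sq_norm_mul_pow_eq_circleAverage, Real.circleAverage_def]
  refine Tendsto.const_smul ?_ _
  refine intervalIntegral.tendsto_integral_filter_of_dominated_convergence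
    (fun _ => (∑' n, ‖a n‖ * |r| ^ n) ^ 2) (.of_forall fun s => ?_)
    (.of_forall fun s => .of_forall fun θ _ => hbound s θ) intervalIntegrable_const
    (.of_forall fun θ _ => ((hg _ (circleMap_mem_sphere' 0 r θ)).norm.pow 2))
  exact Continuous.aestronglyMeasurable (by fun_prop)

theorem lintegral_sq_norm_circleMap {r : ℝ}
    (hg : ∀ z ∈ sphere (0 : ℂ) |r|, HasSum (fun n => a n * z ^ n) (g z)) :
    ∫⁻ θ in Ioo (-π) π, ENNReal.ofReal (‖g (circleMap 0 r θ)‖ ^ 2) =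
      ∑' n, ENNReal.ofReal (2 * π * (‖a n‖ ^ 2 * r ^ (2 * n))) := by
  have hcont : Continuous fun θ => ‖g (circleMap 0 r θ)‖ ^ 2 :=
    (continuous_comp_circleMap_of_hasSum hg).norm.pow 2
  have hparseval := (hasSum_sq_norm_circleAverage hg).mul_left (2 * π)
  have hshift : 2 * π * Real.circleAverage (fun z => ‖g z‖ ^ 2) 0 r =
      ∫ θ in -π..π, ‖g (circleMap 0 r θ)‖ ^ 2 := by
    rw [Real.circleAverage_eq_integral_add (-π), smul_eq_mul,
      mul_inv_cancel_left₀ Real.two_pi_pos.ne',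
      intervalIntegral.integral_comp_add_right (fun θ => ‖g (circleMap 0 r θ)‖ ^ 2)]
    ring_nf
  rw [← ENNReal.ofReal_tsum_of_nonneg (fun n => ?_) hparseval.summable, hparseval.tsum_eq, hshift,
    intervalIntegral.integral_of_le (by linarith [Real.pi_pos]), integral_Ioc_eq_integral_Ioo,
    ofReal_integral_eq_lintegral_ofReal (hcont.integrableOn_Icc.mono_set Ioo_subset_Icc_self)
      (.of_forall fun θ => by positivity)]
  rw [pow_mul]
  positivity

theorem lintegral_eq_lintegral_circleMap {F : ℂ → ℝ≥0∞} (hF : Measurable F) :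
    ∫⁻ z, F z =
      ∫⁻ r in Ioi (0 : ℝ), ENNReal.ofReal r * ∫⁻ θ in Ioo (-π) π, F (circleMap 0 r θ) := by
  have hpolar (p : ℝ × ℝ) : Complex.polarCoord.symm p = circleMap 0 p.1 p.2 := by
    rw [Complex.polarCoord_symm_apply, circleMap_zero, exp_mul_I, ofReal_cos, ofReal_sin]
  have hmeas : Measurable fun p : ℝ × ℝ => ENNReal.ofReal p.1 * F (circleMap 0 p.1 p.2) :=
    measurable_fst.ennreal_ofReal.mul (hF.comp (by unfold circleMap; fun_prop))
  rw [← Complex.lintegral_comp_polarCoord_symm, polarCoord_target,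
    Measure.volume_eq_prod]
  simp only [hpolar, smul_eq_mul]
  rw [setLIntegral_prod _ hmeas.aemeasurable]
  have hslice (r : ℝ) : Measurable fun θ => F (circleMap 0 r θ) :=
    hF.comp (continuous_circleMap 0 r).measurable
  exact lintegral_congr fun r => lintegral_const_mul (ENNReal.ofReal r) (hslice r)

theorem lintegral_ball_eq_lintegral_circleMap {F : ℂ → ℝ≥0∞} {R : ℝ}
    (hF : Measurable ((ball 0 R).indicator F)) :
    ∫⁻ z in ball 0 R, F z =
      ∫⁻ r in Ioo 0 R, ENNReal.ofReal r * ∫⁻ θ in Ioo (-π) π, F (circleMap 0 r θ) := by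
  have hradius (r : ℝ) (hr : r ∈ Ioi 0) :
      ENNReal.ofReal r * ∫⁻ θ in Ioo (-π) π, (ball 0 R).indicator F (circleMap 0 r θ) =
        (Ioo 0 R).indicator
          (fun r => ENNReal.ofReal r * ∫⁻ θ in Ioo (-π) π, F (circleMap 0 r θ)) r := by
    have hr0 : 0 < r := hr
    by_cases hrR : r < R <;> simp [indicator, abs_of_pos hr0, hr0, hrR]
  rw [← lintegral_indicator measurableSet_ball, lintegral_eq_lintegral_circleMap hF,
    setLIntegral_congr_fun measurableSet_Ioi hradius, setLIntegral_indicator measurableSet_Ioo,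
    inter_eq_left.2 Ioo_subset_Ioi_self]

theorem measurable_indicator_of_hasSum {s : Set ℂ} (hs : MeasurableSet s)
    (hg : ∀ z ∈ s, HasSum (fun n => a n * z ^ n) (g z)) : Measurable (s.indicator g) := by
  refine measurable_of_tendsto_metrizable
    (f := fun N => s.indicator fun z => ∑ n ∈ Finset.range N, a n * z ^ n)
    (fun N => Measurable.indicator (by fun_prop) hs) (tendsto_pi_nhds.2 fun z => ?_)
  by_cases hz : z ∈ s
  · simpa only [indicator_of_mem hz] using (hg z hz).tendsto_sum_nat
  · simpa only [indicator_of_notMem hz] using tendsto_const_nhds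

theorem lintegral_Ioo_ofReal_pow {R : ℝ} (hR : 0 ≤ R) (m : ℕ) :
    ∫⁻ r in Ioo 0 R, ENNReal.ofReal (r ^ m) = ENNReal.ofReal (R ^ (m + 1) / (m + 1)) := by
  rw [← ofReal_integral_eq_lintegral_ofReal
      ((continuous_pow m).integrableOn_Icc.mono_set Ioo_subset_Icc_self)
      ((ae_restrict_iff' measurableSet_Ioo).2 (.of_forall fun r hr => pow_nonneg hr.1.le m)),
    ← integral_Ioc_eq_integral_Ioo, ← intervalIntegral.integral_of_le hR, integral_pow]
  simp

theorem lintegral_sq_norm_ball {R : ℝ} (hR : 0 ≤ R)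
    (hg : ∀ z ∈ ball (0 : ℂ) R, HasSum (fun n => a n * z ^ n) (g z)) :
    ∫⁻ z in ball 0 R, ENNReal.ofReal (‖g z‖ ^ 2) =
      ∑' n : ℕ, ENNReal.ofReal (π * R ^ (2 * n + 2) * (‖a n‖ ^ 2 / (n + 1))) := by
  have hmeas : Measurable ((ball 0 R).indicator fun z => ENNReal.ofReal (‖g z‖ ^ 2)) := by
    convert ((measurable_indicator_of_hasSum measurableSet_ball hg).norm.pow_const 2).ennreal_ofReal
      using 2 with z
    by_cases hz : z ∈ ball 0 R <;> simp [hz]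
  have hcircle (r : ℝ) (hr : r ∈ Ioo 0 R) :
      ENNReal.ofReal r * ∫⁻ θ in Ioo (-π) π, ENNReal.ofReal (‖g (circleMap 0 r θ)‖ ^ 2) =
        ∑' n, ENNReal.ofReal (2 * π * ‖a n‖ ^ 2) * ENNReal.ofReal (r ^ (2 * n + 1)) := by
    rw [lintegral_sq_norm_circleMap fun z hz => hg z ?_, ← ENNReal.tsum_mul_left]
    · refine tsum_congr fun n => ?_
      rw [← ENNReal.ofReal_mul hr.1.le, ← ENNReal.ofReal_mul (by positivity)]
      ring_nf
    · simpa [abs_of_pos hr.1, mem_sphere_zero_iff_norm.1 hz] using hr.2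
  rw [lintegral_ball_eq_lintegral_circleMap hmeas,
    setLIntegral_congr_fun measurableSet_Ioo hcircle, lintegral_tsum fun n => by fun_prop]
  refine tsum_congr fun n => ?_
  rw [lintegral_const_mul _ (by fun_prop), lintegral_Ioo_ofReal_pow hR,
    ← ENNReal.ofReal_mul (by positivity)]
  congr 1
  push_cast
  field_simp
  ring

theorem integrableOn_sq_norm_ball_iff {R : ℝ} (hR : 0 ≤ R)
    (hg : ∀ z ∈ ball (0 : ℂ) R, HasSum (fun n => a n * z ^ n) (g z)) :
    IntegrableOn (fun z => ‖g z‖ ^ 2) (ball 0 R) ↔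
      Summable fun n : ℕ => π * R ^ (2 * n + 2) * (‖a n‖ ^ 2 / (n + 1)) := by
  have hmeas : AEStronglyMeasurable (fun z => ‖g z‖ ^ 2) (volume.restrict (ball 0 R)) :=
    (((aestronglyMeasurable_indicator_iff measurableSet_ball).1
      (measurable_indicator_of_hasSum measurableSet_ball hg).aestronglyMeasurable).norm).pow 2
  rw [IntegrableOn, ← lintegral_ofReal_ne_top_iff_integrable hmeas
    (.of_forall fun z => by positivity), lintegral_sq_norm_ball hR hg]
  refine ⟨fun h => ?_, fun h => ?_⟩
  · refine (ENNReal.summable_toReal h).congr fun n => ENNReal.toReal_ofReal (by positivity)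
  · rw [← ENNReal.ofReal_tsum_of_nonneg (fun n => by positivity) h]
    exact ENNReal.ofReal_ne_top

theorem hasSum_integral_sq_norm_ball {R : ℝ} (hR : 0 ≤ R)
    (hg : ∀ z ∈ ball (0 : ℂ) R, HasSum (fun n => a n * z ^ n) (g z))
    (hint : IntegrableOn (fun z => ‖g z‖ ^ 2) (ball 0 R)) :
    HasSum (fun n : ℕ => π * R ^ (2 * n + 2) * (‖a n‖ ^ 2 / (n + 1)))
      (∫ z in ball 0 R, ‖g z‖ ^ 2) := by
  have hsummable := (integrableOn_sq_norm_ball_iff hR hg).1 hint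
  have hnonneg (n : ℕ) : 0 ≤ π * R ^ (2 * n + 2) * (‖a n‖ ^ 2 / (n + 1)) := by positivity
  have htsum : ENNReal.ofReal (∫ z in ball 0 R, ‖g z‖ ^ 2) =
      ENNReal.ofReal (∑' n : ℕ, π * R ^ (2 * n + 2) * (‖a n‖ ^ 2 / (n + 1))) := by
    rw [ofReal_integral_eq_lintegral_ofReal hint (.of_forall fun z => by positivity),
      lintegral_sq_norm_ball hR hg, ENNReal.ofReal_tsum_of_nonneg hnonneg hsummable]
  rw [(ENNReal.ofReal_eq_ofReal_iff (integral_nonneg fun z => by positivity)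
    (tsum_nonneg hnonneg)).1 htsum]
  exact hsummable.hasSum

end Parseval

/-! ### The Dirichlet and Bergman norms -/

section Dirichlet

variable {f g : ℂ → ℂ} {w : ℂ}

theorem mem_unitDisc : w ∈ unitDisc ↔ ‖w‖ < 1 :=
  mem_ball_zero_iff

theorem isOpen_unitDisc : IsOpen unitDisc :=
  isOpen_ball

/-- The `n`-th Taylor coefficient of `f` at the origin; area integrals over the disc are weighted
`ℓ²` sums of these. -/
def taylorCoeff (f : ℂ → ℂ) (n : ℕ) : ℂ :=
  (n.factorial : ℂ)⁻¹ * iteratedDeriv n f 0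

theorem taylorCoeff_zero (f : ℂ → ℂ) : taylorCoeff f 0 = f 0 := by
  simp [taylorCoeff]

theorem taylorCoeff_deriv (f : ℂ → ℂ) (n : ℕ) :
    taylorCoeff (deriv f) n = (n + 1) * taylorCoeff f (n + 1) := by
  have hn : (n : ℂ) + 1 ≠ 0 := n.cast_add_one_ne_zero
  rw [taylorCoeff, taylorCoeff, ← iteratedDeriv_succ', Nat.factorial_succ]
  push_cast
  field_simp

theorem hasSum_taylorCoeff (hf : DifferentiableOn ℂ f unitDisc) (hw : w ∈ unitDisc) :
    HasSum (fun n => taylorCoeff f n * w ^ n) (f w) := by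
  refine (hasSum_taylorSeries_on_ball hf hw).congr_fun fun n => ?_
  simp only [taylorCoeff, sub_zero, smul_eq_mul]
  ring

theorem integrableOn_sq_norm_unitDisc_iff (hg : DifferentiableOn ℂ g unitDisc) :
    IntegrableOn (fun z => ‖g z‖ ^ 2) unitDisc ↔
      Summable fun n : ℕ => ‖taylorCoeff g n‖ ^ 2 / (n + 1) := by
  rw [unitDisc, integrableOn_sq_norm_ball_iff zero_le_one fun z hz => hasSum_taylorCoeff hg hz]
  simp only [one_pow, mul_one]
  exact summable_mul_left_iff Real.pi_ne_zero

theorem hasSum_integral_sq_norm_unitDisc (hg : DifferentiableOn ℂ g unitDisc)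
    (hint : IntegrableOn (fun z => ‖g z‖ ^ 2) unitDisc) :
    HasSum (fun n : ℕ => ‖taylorCoeff g n‖ ^ 2 / (n + 1))
      (1 / π * ∫ z in unitDisc, ‖g z‖ ^ 2) := by
  have h := hasSum_integral_sq_norm_ball zero_le_one (fun z hz => hasSum_taylorCoeff hg hz) hint
  refine (h.mul_left (1 / π)).congr_fun fun n => ?_
  have := Real.pi_ne_zero
  field_simp
  simp

theorem sq_norm_le_mul_of_hasSum {ι E : Type*} [SeminormedAddCommGroup E] {F : ι → E}
    {A B : ι → ℝ} {x : E} {a b : ℝ} (hF : HasSum F x) (hA : HasSum A a) (hB : HasSum B b)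
    (hA0 : ∀ i, 0 ≤ A i) (hB0 : ∀ i, 0 ≤ B i) (hle : ∀ i, ‖F i‖ ^ 2 ≤ A i * B i) :
    ‖x‖ ^ 2 ≤ a * b := by
  refine le_of_tendsto_of_tendsto' (hF.norm.pow 2) (Tendsto.mul hA hB) fun s => ?_
  calc ‖∑ i ∈ s, F i‖ ^ 2 ≤ (∑ i ∈ s, ‖F i‖) ^ 2 := by
        gcongr
        exact norm_sum_le _ _
    _ ≤ (∑ i ∈ s, A i) * ∑ i ∈ s, B i :=
        Finset.sum_sq_le_sum_mul_sum_of_sq_le_mul s (fun i _ => hA0 i) (fun i _ => hB0 i)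
          fun i _ => hle i

theorem hasSum_succ_mul_geometric {x : ℝ} (hx : ‖x‖ < 1) :
    HasSum (fun n : ℕ => (n + 1) * x ^ n) (1 / (1 - x) ^ 2) := by
  have hne : 1 - x ≠ 0 := sub_ne_zero.2 (lt_of_abs_lt hx).ne'
  have hsum := (hasSum_coe_mul_geometric_of_norm_lt_one hx).add
    (hasSum_geometric_of_norm_lt_one hx)
  have hval : x / (1 - x) ^ 2 + (1 - x)⁻¹ = 1 / (1 - x) ^ 2 := by
    field_simp
    ring
  simpa only [hval, ← add_one_mul] using hsum

theorem sq_norm_le_integral_div (hg : DifferentiableOn ℂ g unitDisc)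
    (hint : IntegrableOn (fun z => ‖g z‖ ^ 2) unitDisc) (hw : w ∈ unitDisc) :
    ‖g w‖ ^ 2 ≤ (1 / π * ∫ z in unitDisc, ‖g z‖ ^ 2) / (1 - ‖w‖ ^ 2) ^ 2 := by
  have hw1 : ‖‖w‖ ^ 2‖ < 1 := by
    rw [norm_pow, norm_norm]
    exact pow_lt_one₀ (norm_nonneg w) (mem_unitDisc.1 hw) two_ne_zero
  rw [div_eq_mul_one_div]
  refine sq_norm_le_mul_of_hasSum (hasSum_taylorCoeff hg hw)
    (hasSum_integral_sq_norm_unitDisc hg hint) (hasSum_succ_mul_geometric hw1)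
    (fun n => by positivity) (fun n => by positivity) fun n => ?_
  rw [norm_mul, norm_pow, mul_pow, pow_right_comm]
  field_simp
  rfl

theorem dirNormSq_nonneg (f : ℂ → ℂ) : 0 ≤ dirNormSq f := by
  have : 0 ≤ ∫ z in unitDisc, ‖deriv f z‖ ^ 2 := integral_nonneg fun z => by positivity
  unfold dirNormSq
  positivity

theorem sq_norm_zero_le_dirNormSq (f : ℂ → ℂ) : ‖f 0‖ ^ 2 ≤ dirNormSq f := by
  have : 0 ≤ ∫ z in unitDisc, ‖deriv f z‖ ^ 2 := integral_nonneg fun z => by positivity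
  exact le_add_of_nonneg_right (by positivity)

theorem integral_sq_norm_deriv_le (f : ℂ → ℂ) :
    1 / π * ∫ z in unitDisc, ‖deriv f z‖ ^ 2 ≤ dirNormSq f :=
  le_add_of_nonneg_left (by positivity)

theorem sq_norm_taylorCoeff_succ_div_le (f : ℂ → ℂ) (n : ℕ) :
    ‖taylorCoeff f (n + 1)‖ ^ 2 / ((n + 1 : ℕ) + 1) ≤ (n + 1) * ‖taylorCoeff f (n + 1)‖ ^ 2 := by
  calc ‖taylorCoeff f (n + 1)‖ ^ 2 / ((n + 1 : ℕ) + 1) ≤ ‖taylorCoeff f (n + 1)‖ ^ 2 :=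
        div_le_self (by positivity) (by norm_cast; omega)
    _ ≤ (n + 1) * ‖taylorCoeff f (n + 1)‖ ^ 2 :=
        le_mul_of_one_le_left (by positivity) (by norm_cast; omega)

theorem memDirichlet_of_sq_norm_deriv_le {G : ℂ → ℝ} (hf : DifferentiableOn ℂ f unitDisc)
    (hG : IntegrableOn G unitDisc) (hle : ∀ z ∈ unitDisc, ‖deriv f z‖ ^ 2 ≤ G z) :
    MemDirichlet f := by
  have hmeas : AEStronglyMeasurable (fun z => ‖deriv f z‖ ^ 2) (volume.restrict unitDisc) :=
    ((hf.deriv isOpen_unitDisc).continuousOn.norm.pow 2).aestronglyMeasurable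
      isOpen_unitDisc.measurableSet
  refine ⟨hf, hG.mono' hmeas ((ae_restrict_iff' isOpen_unitDisc.measurableSet).2
    (.of_forall fun z hz => ?_))⟩
  rw [norm_pow, norm_norm]
  exact hle z hz

namespace MemDirichlet

theorem differentiableOn_deriv (hf : MemDirichlet f) : DifferentiableOn ℂ (deriv f) unitDisc :=
  hf.1.deriv isOpen_unitDisc

theorem hasSum_dirNormSq (hf : MemDirichlet f) :
    HasSum (fun n : ℕ => (n + 1) * ‖taylorCoeff f (n + 1)‖ ^ 2) (dirNormSq f - ‖f 0‖ ^ 2) := by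
  rw [dirNormSq, add_sub_cancel_left]
  refine (hasSum_integral_sq_norm_unitDisc hf.differentiableOn_deriv hf.2).congr_fun fun n => ?_
  have hnorm : ‖(n : ℂ) + 1‖ = n + 1 := by
    rw [← Nat.cast_add_one, norm_natCast, Nat.cast_add_one]
  rw [taylorCoeff_deriv, norm_mul, mul_pow, hnorm]
  field_simp

theorem integrableOn_sq_norm (hf : MemDirichlet f) :
    IntegrableOn (fun z => ‖f z‖ ^ 2) unitDisc := by
  refine (integrableOn_sq_norm_unitDisc_iff hf.1).2 ((summable_nat_add_iff 1).1 ?_)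
  exact .of_nonneg_of_le (fun n => by positivity)
    (fun n => sq_norm_taylorCoeff_succ_div_le f n) hf.hasSum_dirNormSq.summable

theorem integral_sq_norm_le (hf : MemDirichlet f) :
    1 / π * ∫ z in unitDisc, ‖f z‖ ^ 2 ≤ dirNormSq f := by
  have htail := (hasSum_nat_add_iff' 1).2
    (hasSum_integral_sq_norm_unitDisc hf.1 hf.integrableOn_sq_norm)
  have hle := hasSum_le (sq_norm_taylorCoeff_succ_div_le f) htail hf.hasSum_dirNormSq
  rw [Finset.sum_range_one, taylorCoeff_zero, Nat.cast_zero, zero_add, div_one] at hle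
  linarith

theorem integral_sq_norm_add_sq_norm_deriv_le (hf : MemDirichlet f) :
    1 / π * ∫ z in unitDisc, (‖f z‖ ^ 2 + ‖deriv f z‖ ^ 2) ≤ 2 * dirNormSq f := by
  rw [integral_add hf.integrableOn_sq_norm hf.2, mul_add]
  linarith [hf.integral_sq_norm_le, integral_sq_norm_deriv_le f]

theorem sq_norm_le (hf : MemDirichlet f) (hw : w ∈ unitDisc) :
    ‖f w‖ ^ 2 ≤ dirNormSq f / (1 - ‖w‖ ^ 2) ^ 2 :=
  (sq_norm_le_integral_div hf.1 hf.integrableOn_sq_norm hw).trans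
    (by gcongr; exact hf.integral_sq_norm_le)

theorem sq_norm_deriv_le (hf : MemDirichlet f) (hw : w ∈ unitDisc) :
    ‖deriv f w‖ ^ 2 ≤ dirNormSq f / (1 - ‖w‖ ^ 2) ^ 2 :=
  (sq_norm_le_integral_div hf.differentiableOn_deriv hf.2 hw).trans
    (by gcongr; exact integral_sq_norm_deriv_le f)

end MemDirichlet

end Dirichlet

/-! ### A boundedness criterion -/

section Criterion

variable {f u h φ : ℂ → ℂ}

theorem sq_norm_deriv_mul_le {M K : ℝ} (hM : 0 ≤ M) (hK : 0 ≤ K) {z : ℂ}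
    (hu : DifferentiableAt ℂ u z) (hh : DifferentiableAt ℂ h z)
    (hbound : (‖u z‖ ^ 2 ≤ M ∧ ‖deriv u z‖ ^ 2 ≤ M) ∨ (‖h z‖ ^ 2 ≤ K ∧ ‖deriv h z‖ ^ 2 ≤ K)) :
    ‖deriv (fun z => u z * h z) z‖ ^ 2 ≤
      2 * (M * (‖h z‖ ^ 2 + ‖deriv h z‖ ^ 2) + K * (‖u z‖ ^ 2 + ‖deriv u z‖ ^ 2)) := by
  rw [deriv_fun_mul hu hh]
  calc ‖deriv u z * h z + u z * deriv h z‖ ^ 2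
      ≤ (‖deriv u z‖ * ‖h z‖ + ‖u z‖ * ‖deriv h z‖) ^ 2 := by
        gcongr
        exact (norm_add_le _ _).trans_eq (by rw [norm_mul, norm_mul])
    _ ≤ 2 * (‖deriv u z‖ ^ 2 * ‖h z‖ ^ 2 + ‖u z‖ ^ 2 * ‖deriv h z‖ ^ 2) := by
        rw [← mul_pow, ← mul_pow]
        exact add_sq_le
    _ ≤ 2 * (M * (‖h z‖ ^ 2 + ‖deriv h z‖ ^ 2) + K * (‖u z‖ ^ 2 + ‖deriv u z‖ ^ 2)) := by
        gcongr 2 * ?_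
        rcases hbound with ⟨hu0, hu1⟩ | ⟨hh0, hh1⟩
        · have : 0 ≤ K * (‖u z‖ ^ 2 + ‖deriv u z‖ ^ 2) := by positivity
          linarith [mul_le_mul_of_nonneg_right hu1 (sq_nonneg ‖h z‖),
            mul_le_mul_of_nonneg_right hu0 (sq_nonneg ‖deriv h z‖)]
        · have : 0 ≤ M * (‖h z‖ ^ 2 + ‖deriv h z‖ ^ 2) := by positivity
          linarith [mul_le_mul_of_nonneg_left hh0 (sq_nonneg ‖deriv u z‖),
            mul_le_mul_of_nonneg_left hh1 (sq_nonneg ‖u z‖)]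

namespace MemDirichlet

theorem mul_of_bounds (hu : MemDirichlet u) (hh : MemDirichlet h) {M K : ℝ}
    (hM : 0 ≤ M) (hK : 0 ≤ K)
    (hbound : ∀ z ∈ unitDisc,
      (‖u z‖ ^ 2 ≤ M ∧ ‖deriv u z‖ ^ 2 ≤ M) ∨ (‖h z‖ ^ 2 ≤ K ∧ ‖deriv h z‖ ^ 2 ≤ K)) :
    MemDirichlet (fun z => u z * h z) ∧
      dirNormSq (fun z => u z * h z) ≤
        ‖u 0‖ ^ 2 * ‖h 0‖ ^ 2 + 4 * (M * dirNormSq h + K * dirNormSq u) := by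
  have hdiff : DifferentiableOn ℂ (fun z => u z * h z) unitDisc := hu.1.mul hh.1
  have hle (z : ℂ) (hz : z ∈ unitDisc) := sq_norm_deriv_mul_le hM hK
    (hu.1.differentiableAt (isOpen_unitDisc.mem_nhds hz))
    (hh.1.differentiableAt (isOpen_unitDisc.mem_nhds hz)) (hbound z hz)
  have hint_u : IntegrableOn (fun z => K * (‖u z‖ ^ 2 + ‖deriv u z‖ ^ 2)) unitDisc :=
    (hu.integrableOn_sq_norm.add hu.2).const_mul K
  have hint_h : IntegrableOn (fun z => M * (‖h z‖ ^ 2 + ‖deriv h z‖ ^ 2)) unitDisc :=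
    (hh.integrableOn_sq_norm.add hh.2).const_mul M
  have hint_rhs : IntegrableOn (fun z => 2 * (M * (‖h z‖ ^ 2 + ‖deriv h z‖ ^ 2) +
      K * (‖u z‖ ^ 2 + ‖deriv u z‖ ^ 2))) unitDisc := (hint_h.add hint_u).const_mul 2
  have hmem := memDirichlet_of_sq_norm_deriv_le hdiff hint_rhs hle
  refine ⟨hmem, ?_⟩
  have hmono := setIntegral_mono_on hmem.2 hint_rhs isOpen_unitDisc.measurableSet hle
  rw [integral_const_mul, integral_add hint_h hint_u, integral_const_mul, integral_const_mul]
    at hmono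
  have hmono_pi := mul_le_mul_of_nonneg_left hmono (one_div_nonneg.2 Real.pi_pos.le)
  have hD_h := mul_le_mul_of_nonneg_left hh.integral_sq_norm_add_sq_norm_deriv_le hM
  have hD_u := mul_le_mul_of_nonneg_left hu.integral_sq_norm_add_sq_norm_deriv_le hK
  rw [dirNormSq, norm_mul, mul_pow]
  linarith

theorem sq_norm_comp_le (hf : MemDirichlet f) {ρ L : ℝ} (hρ : ρ < 1) {z : ℂ}
    (hφ : DifferentiableAt ℂ φ z) (hφρ : ‖φ z‖ ≤ ρ) (hφL : ‖deriv φ z‖ ≤ L) :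
    ‖f (φ z)‖ ^ 2 ≤ dirNormSq f / (1 - ρ ^ 2) ^ 2 * (1 + L ^ 2) ∧
      ‖deriv (fun z => f (φ z)) z‖ ^ 2 ≤ dirNormSq f / (1 - ρ ^ 2) ^ 2 * (1 + L ^ 2) := by
  have hρ0 : 0 ≤ ρ := (norm_nonneg _).trans hφρ
  have hρ1 : 0 < 1 - ρ ^ 2 := by nlinarith
  have hmem : φ z ∈ unitDisc := mem_unitDisc.2 (hφρ.trans_lt hρ)
  have hD := dirNormSq_nonneg f
  have hdiv : dirNormSq f / (1 - ‖φ z‖ ^ 2) ^ 2 ≤ dirNormSq f / (1 - ρ ^ 2) ^ 2 := by gcongr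
  have hderiv : deriv (fun z => f (φ z)) z = deriv f (φ z) * deriv φ z :=
    deriv_comp z (hf.1.differentiableAt (isOpen_unitDisc.mem_nhds hmem)) hφ
  constructor
  · exact ((hf.sq_norm_le hmem).trans hdiv).trans
      (le_mul_of_one_le_right (by positivity) (by nlinarith))
  · rw [hderiv, norm_mul, mul_pow]
    gcongr
    · exact (hf.sq_norm_deriv_le hmem).trans hdiv
    · nlinarith [norm_nonneg (deriv φ z)]

theorem wcoBounded_of_bounds (hu : MemDirichlet u) (hφ : DifferentiableOn ℂ φ unitDisc)
    (hcomp : WCOBounded (fun _ => 1) φ) {B ρ L : ℝ} (hρ : ρ < 1)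
    (hbound : ∀ z ∈ unitDisc,
      (‖u z‖ ≤ B ∧ ‖deriv u z‖ ≤ B) ∨ (‖φ z‖ ≤ ρ ∧ ‖deriv φ z‖ ≤ L)) :
    WCOBounded u φ := by
  obtain ⟨C, hC, hcomp⟩ := hcomp
  simp only [one_mul] at hcomp
  have hDu := dirNormSq_nonneg u
  refine ⟨‖u 0‖ ^ 2 * C + 4 * (B ^ 2 * C + 1 / (1 - ρ ^ 2) ^ 2 * (1 + L ^ 2) * dirNormSq u),
    by positivity, fun f hf => ?_⟩
  have hDf := dirNormSq_nonneg f
  obtain ⟨hmem, hle⟩ := hcomp f hf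
  have hh0 : ‖f (φ 0)‖ ^ 2 ≤ C * dirNormSq f := (sq_norm_zero_le_dirNormSq _).trans hle
  obtain ⟨hmul, hmul_le⟩ := hu.mul_of_bounds hmem (M := B ^ 2)
    (K := dirNormSq f / (1 - ρ ^ 2) ^ 2 * (1 + L ^ 2)) (by positivity) (by positivity)
    fun z hz => (hbound z hz).imp (fun ⟨hu0, hu1⟩ => ⟨by gcongr, by gcongr⟩)
      fun ⟨hφρ, hφL⟩ => hf.sq_norm_comp_le hρ
        (hφ.differentiableAt (isOpen_unitDisc.mem_nhds hz)) hφρ hφL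
  refine ⟨hmul, hmul_le.trans ?_⟩
  calc _ ≤ ‖u 0‖ ^ 2 * (C * dirNormSq f) + 4 * (B ^ 2 * (C * dirNormSq f) +
        dirNormSq f / (1 - ρ ^ 2) ^ 2 * (1 + L ^ 2) * dirNormSq u) := by gcongr
    _ = _ := by ring

end MemDirichlet

end Criterion

/-! ### Composition with injective self-maps -/

section Composition

variable {E : Type*} [NormedAddCommGroup E] [NormedSpace ℝ E] {φ : ℂ → ℂ}

theorem abs_det_toSpanSingleton_restrictScalars (c : ℂ) :
    |((ContinuousLinearMap.toSpanSingleton ℂ c).restrictScalars ℝ).det| = ‖c‖ ^ 2 := by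
  simp [ContinuousLinearMap.det, LinearMap.det_restrictScalars, Algebra.norm_complex_eq,
    Complex.normSq_eq_norm_sq]

theorem hasFDerivWithinAt_restrictScalars_of_isOpen {s : Set ℂ} (hs : IsOpen s)
    (hφ : DifferentiableOn ℂ φ s) (z : ℂ) (hz : z ∈ s) : HasFDerivWithinAt φ
      ((ContinuousLinearMap.toSpanSingleton ℂ (deriv φ z)).restrictScalars ℝ) s z :=
  ((hφ.differentiableAt (hs.mem_nhds hz)).hasDerivAt.hasFDerivAt.restrictScalars
    ℝ).hasFDerivWithinAt

theorem integrableOn_image_iff_integrableOn_sq_norm_deriv_smul {s : Set ℂ} (hs : IsOpen s)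
    (hφ : DifferentiableOn ℂ φ s) (hinj : InjOn φ s) (g : ℂ → E) :
    IntegrableOn g (φ '' s) ↔ IntegrableOn (fun z => ‖deriv φ z‖ ^ 2 • g (φ z)) s := by
  simpa only [abs_det_toSpanSingleton_restrictScalars] using
    integrableOn_image_iff_integrableOn_abs_det_fderiv_smul volume hs.measurableSet
      (hasFDerivWithinAt_restrictScalars_of_isOpen hs hφ) hinj g

theorem integral_image_eq_integral_sq_norm_deriv_smul {s : Set ℂ} (hs : IsOpen s)
    (hφ : DifferentiableOn ℂ φ s) (hinj : InjOn φ s) (g : ℂ → E) :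
    ∫ w in φ '' s, g w = ∫ z in s, ‖deriv φ z‖ ^ 2 • g (φ z) := by
  simpa only [abs_det_toSpanSingleton_restrictScalars] using
    integral_image_eq_integral_abs_det_fderiv_smul volume hs.measurableSet
      (hasFDerivWithinAt_restrictScalars_of_isOpen hs hφ) hinj g

theorem wcoBounded_one_of_injOn (hφ : DifferentiableOn ℂ φ unitDisc)
    (hmaps : MapsTo φ unitDisc unitDisc) (hinj : InjOn φ unitDisc) :
    WCOBounded (fun _ => 1) φ := by
  have h0 : (0 : ℂ) ∈ unitDisc := by simp [mem_unitDisc]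
  refine ⟨1 / (1 - ‖φ 0‖ ^ 2) ^ 2 + 1, by positivity, fun f hf => ?_⟩
  simp only [one_mul]
  have hchain : EqOn (fun z => ‖deriv (fun z => f (φ z)) z‖ ^ 2)
      (fun z => ‖deriv φ z‖ ^ 2 • ‖deriv f (φ z)‖ ^ 2) unitDisc := fun z hz => by
    have hderiv : deriv (fun z => f (φ z)) z = deriv f (φ z) * deriv φ z :=
      deriv_comp z (hf.1.differentiableAt (isOpen_unitDisc.mem_nhds (hmaps hz)))
        (hφ.differentiableAt (isOpen_unitDisc.mem_nhds hz))
    simp only [hderiv, norm_mul, mul_pow, smul_eq_mul, mul_comm]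
  have hint : IntegrableOn (fun z => ‖deriv (fun z => f (φ z)) z‖ ^ 2) unitDisc :=
    (integrableOn_congr_fun hchain isOpen_unitDisc.measurableSet).2 <|
      (integrableOn_image_iff_integrableOn_sq_norm_deriv_smul isOpen_unitDisc hφ hinj
        fun w => ‖deriv f w‖ ^ 2).1 (hf.2.mono_set hmaps.image_subset)
  have hle : ∫ z in unitDisc, ‖deriv (fun z => f (φ z)) z‖ ^ 2 ≤
      ∫ z in unitDisc, ‖deriv f z‖ ^ 2 := by
    rw [setIntegral_congr_fun isOpen_unitDisc.measurableSet hchain,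
      ← integral_image_eq_integral_sq_norm_deriv_smul isOpen_unitDisc hφ hinj
        fun w => ‖deriv f w‖ ^ 2]
    exact setIntegral_mono_set hf.2 (.of_forall fun z => by positivity)
      hmaps.image_subset.eventuallyLE
  refine ⟨⟨hf.1.comp hφ hmaps, hint⟩, ?_⟩
  calc dirNormSq (fun z => f (φ z))
      ≤ dirNormSq f / (1 - ‖φ 0‖ ^ 2) ^ 2 + 1 / π * ∫ z in unitDisc, ‖deriv f z‖ ^ 2 :=
        add_le_add (hf.sq_norm_le (hmaps h0)) (by gcongr)
    _ ≤ dirNormSq f / (1 - ‖φ 0‖ ^ 2) ^ 2 + dirNormSq f := by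
        gcongr
        exact integral_sq_norm_deriv_le f
    _ = (1 / (1 - ‖φ 0‖ ^ 2) ^ 2 + 1) * dirNormSq f := by ring

end Composition

/-! ### Power series with antitone coefficients -/

section PowerSeries

theorem summable_ofReal_mul_pow_of_antitone {c : ℕ → ℝ} (hc : Antitone c) (hc0 : ∀ k, 0 ≤ c k)
    {z : ℂ} (hz : ‖z‖ < 1) : Summable fun k => (c k : ℂ) * z ^ k := by
  refine .of_norm_bounded ((summable_geometric_of_lt_one (norm_nonneg z) hz).mul_left (c 0))
    fun k => ?_
  rw [norm_mul, norm_pow, norm_real, Real.norm_of_nonneg (hc0 k)]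
  gcongr
  exact hc k.zero_le

theorem norm_one_sub_mul_tsum_le_of_antitone {c : ℕ → ℝ} (hc : Antitone c) (hc0 : ∀ k, 0 ≤ c k)
    {z : ℂ} (hz : ‖z‖ < 1) : ‖(1 - z) * ∑' k, (c k : ℂ) * z ^ k‖ ≤ 2 * c 0 := by
  have hsum := (summable_ofReal_mul_pow_of_antitone hc hc0 hz).hasSum
  set S := ∑' k, (c k : ℂ) * z ^ k
  -- Abel: `(1 - z) S = c₀ - ∑ (cₖ - cₖ₊₁) zᵏ⁺¹`, and the differences are nonnegative.
  have hshift : HasSum (fun k => (c (k + 1) : ℂ) * z ^ (k + 1)) (S - c 0) := by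
    simpa using (hasSum_nat_add_iff' 1).2 hsum
  have hdiff : HasSum (fun k => ((c k - c (k + 1) : ℝ) : ℂ) * z ^ (k + 1))
      (S * z - (S - c 0)) := by
    refine ((hsum.mul_right z).sub hshift).congr_fun fun k => ?_
    push_cast
    ring
  have hnorm : ‖S * z - (S - c 0)‖ ≤ c 0 := by
    refine le_of_tendsto hdiff.tendsto_sum_nat.norm (.of_forall fun N => ?_)
    calc ‖∑ k ∈ Finset.range N, ((c k - c (k + 1) : ℝ) : ℂ) * z ^ (k + 1)‖
        ≤ ∑ k ∈ Finset.range N, (c k - c (k + 1)) := by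
          refine norm_sum_le_of_le _ fun k _ => ?_
          have hstep : 0 ≤ c k - c (k + 1) := sub_nonneg.2 (hc k.le_succ)
          rw [norm_mul, norm_pow, norm_real, Real.norm_of_nonneg hstep]
          exact mul_le_of_le_one_right hstep (pow_le_one₀ (norm_nonneg z) hz.le)
      _ = c 0 - c N := Finset.sum_range_sub' c N
      _ ≤ c 0 := sub_le_self _ (hc0 N)
  calc ‖(1 - z) * S‖ = ‖(c 0 : ℂ) - (S * z - (S - c 0))‖ := by ring_nf
    _ ≤ ‖(c 0 : ℂ)‖ + ‖S * z - (S - c 0)‖ := norm_sub_le _ _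
    _ ≤ 2 * c 0 := by
      rw [norm_real, Real.norm_of_nonneg (hc0 0)]
      linarith

theorem hasDerivAt_tsum_mul_pow_div {a : ℕ → ℂ} {R : ℝ}
    (ha : ∀ z ∈ ball (0 : ℂ) R, Summable fun n => a n * z ^ n) (m : ℕ) {z : ℂ}
    (hz : z ∈ ball (0 : ℂ) R) :
    HasDerivAt (fun z => ∑' n : ℕ, a n * z ^ (n + m + 1) / ((n + m + 1 : ℕ) : ℂ))
      (z ^ m * ∑' n, a n * z ^ n) z := by
  obtain ⟨r, hzr, hrR⟩ := exists_between (mem_ball_zero_iff.1 hz)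
  have hr : 0 ≤ r := (norm_nonneg z).trans hzr.le
  have hsummable : Summable fun n => ‖a n‖ * r ^ (n + m) := by
    have h := (ha (r : ℂ) (by simpa [abs_of_nonneg hr] using hrR)).norm.mul_right (r ^ m)
    refine h.congr fun n => ?_
    rw [norm_mul, norm_pow, norm_real, Real.norm_of_nonneg hr, pow_add, mul_assoc]
  rw [← tsum_mul_left]
  simp only [mul_left_comm (z ^ m), ← pow_add, add_comm m]
  refine hasDerivAt_tsum_of_isPreconnected (t := ball 0 r) (y₀ := 0)
    (g' := fun n y => a n * y ^ (n + m)) hsummable isOpen_ball (convex_ball 0 r).isPreconnected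
    (fun n y _ => ?_) (fun n y hy => ?_) (by simpa using (norm_nonneg z).trans_lt hzr)
    (by simp [summable_zero]) (mem_ball_zero_iff.2 hzr)
  · have hn : ((n + m + 1 : ℕ) : ℂ) ≠ 0 := Nat.cast_ne_zero.2 (n + m).succ_ne_zero
    refine (((hasDerivAt_pow (n + m + 1) y).const_mul (a n)).div_const _).congr_deriv ?_
    rw [Nat.add_sub_cancel]
    field_simp
  · rw [norm_mul, norm_pow]
    gcongr
    exact (mem_ball_zero_iff.1 hy).le

end PowerSeries

/-! ### Logarithmic coefficients -/

section LogCoeff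

/-- The coefficients `(log (k + 2))⁻ˢ` of `uLog' / z`, for `s = 3/4`. The index is shifted by two
so that the logarithm is positive for every `k`. -/
def logCoeff (s : ℝ) (k : ℕ) : ℝ :=
  Real.log (k + 2) ^ (-s)

theorem log_natCast_add_two_pos (k : ℕ) : 0 < Real.log (k + 2) :=
  Real.log_pos (by linarith [k.cast_nonneg (α := ℝ)])

theorem logCoeff_nonneg (s : ℝ) (k : ℕ) : 0 ≤ logCoeff s k :=
  Real.rpow_nonneg (log_natCast_add_two_pos k).le _

theorem antitone_logCoeff {s : ℝ} (hs : 0 ≤ s) : Antitone (logCoeff s) := fun j k hjk => by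
  refine Real.rpow_le_rpow_of_nonpos (log_natCast_add_two_pos j) ?_ (neg_nonpos.2 hs)
  gcongr

theorem logCoeff_sq (s : ℝ) (k : ℕ) : logCoeff s k ^ 2 = logCoeff (2 * s) k := by
  rw [logCoeff, logCoeff, ← Real.rpow_mul_natCast (log_natCast_add_two_pos k).le]
  congr 1
  push_cast
  ring

theorem summable_log_rpow_neg_div {s : ℝ} (hs : 1 < s) :
    Summable fun n : ℕ => Real.log n ^ (-s) / n := by
  have hlog (n : ℕ) (hn : 2 ≤ n) : 0 < Real.log n :=
    Real.log_pos (by exact_mod_cast hn)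
  have hnonneg : ∀ᶠ n : ℕ in atTop, 0 ≤ Real.log n ^ (-s) / n :=
    .of_forall fun n => div_nonneg (Real.rpow_nonneg (Real.log_natCast_nonneg n) _) n.cast_nonneg
  have hanti : ∀ᶠ n : ℕ in atTop,
      Real.log (n + 1 : ℕ) ^ (-s) / (n + 1 : ℕ) ≤ Real.log n ^ (-s) / n := by
    filter_upwards [eventually_ge_atTop 2] with n hn
    have hn0 : (0 : ℝ) < n := by exact_mod_cast two_pos.trans_le hn
    have hle : (n : ℝ) ≤ (n + 1 : ℕ) := by exact_mod_cast n.le_succ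
    have hrpow : Real.log (n + 1 : ℕ) ^ (-s) ≤ Real.log n ^ (-s) :=
      Real.rpow_le_rpow_of_nonpos (hlog n hn) (Real.log_le_log hn0 hle) (by linarith)
    exact div_le_div₀ (Real.rpow_nonneg (hlog n hn).le _) hrpow hn0 hle
  rw [← summable_condensed_iff_of_eventually_nonneg hnonneg hanti]
  refine ((Real.summable_nat_rpow.2 (neg_lt_neg hs)).mul_right (Real.log 2 ^ (-s))).congr
    fun k => ?_
  rw [Nat.cast_pow, Nat.cast_two, Real.log_pow, mul_div_cancel₀ _ (by positivity),
    Real.mul_rpow k.cast_nonneg (Real.log_nonneg one_le_two)]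

theorem summable_logCoeff_div {s : ℝ} (hs : 1 < s) :
    Summable fun k : ℕ => logCoeff s k / (k + 1) := by
  have hshift := ((summable_nat_add_iff 2).2 (summable_log_rpow_neg_div hs)).mul_left 2
  refine .of_nonneg_of_le (fun k => div_nonneg (logCoeff_nonneg s k) (by positivity))
    (fun k => ?_) hshift
  have hk : (1 : ℝ) / (k + 1) ≤ 2 * (1 / (k + 2)) := by
    field_simp
    linarith [k.cast_nonneg (α := ℝ)]
  calc logCoeff s k / (k + 1) = logCoeff s k * (1 / (k + 1)) := div_eq_mul_one_div _ _
    _ ≤ logCoeff s k * (2 * (1 / (k + 2))) := by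
      gcongr
      exact logCoeff_nonneg s k
    _ = 2 * (Real.log (k + 2 : ℕ) ^ (-s) / (k + 2 : ℕ)) := by
      rw [logCoeff]
      push_cast
      ring

end LogCoeff

/-! ### The function `uLog` -/

section ULog

variable {z : ℂ}

theorem hasSum_logCoeff_mul_pow {s : ℝ} (hs : 0 ≤ s) (hz : z ∈ unitDisc) :
    HasSum (fun k => (logCoeff s k : ℂ) * z ^ k) (∑' k, (logCoeff s k : ℂ) * z ^ k) :=
  (summable_ofReal_mul_pow_of_antitone (antitone_logCoeff hs) (logCoeff_nonneg s)
    (mem_unitDisc.1 hz)).hasSum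

theorem uLog_eq_tsum_logCoeff : uLog = fun z =>
    ∑' k : ℕ, (logCoeff (3 / 4) k : ℂ) * z ^ (k + 1 + 1) / ((k + 1 + 1 : ℕ) : ℂ) := by
  funext z
  refine tsum_congr fun k => ?_
  rw [logCoeff, Real.rpow_neg (log_natCast_add_two_pos k).le]
  push_cast
  rw [add_assoc (k : ℂ), one_add_one_eq_two, div_mul_eq_div_div, inv_mul_eq_div, div_right_comm]

theorem hasDerivAt_uLog (hz : z ∈ unitDisc) :
    HasDerivAt uLog (z * ∑' k, (logCoeff (3 / 4) k : ℂ) * z ^ k) z := by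
  rw [uLog_eq_tsum_logCoeff]
  simpa only [pow_one] using hasDerivAt_tsum_mul_pow_div (R := 1)
    (fun w hw => (hasSum_logCoeff_mul_pow (by norm_num) hw).summable) 1 hz

theorem norm_deriv_uLog_le (hz : z ∈ unitDisc) :
    ‖deriv uLog z‖ ≤ ‖∑' k, (logCoeff (3 / 4) k : ℂ) * z ^ k‖ := by
  rw [(hasDerivAt_uLog hz).deriv, norm_mul]
  exact mul_le_of_le_one_left (norm_nonneg _) (mem_unitDisc.1 hz).le

theorem differentiableOn_uLog : DifferentiableOn ℂ uLog unitDisc := fun _ hz =>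
  (hasDerivAt_uLog hz).differentiableAt.differentiableWithinAt

theorem memDirichlet_uLog : MemDirichlet uLog := by
  have hsum : IntegrableOn (fun z => ‖∑' k, (logCoeff (3 / 4) k : ℂ) * z ^ k‖ ^ 2) unitDisc := by
    refine (integrableOn_sq_norm_ball_iff zero_le_one fun z hz =>
      hasSum_logCoeff_mul_pow (by norm_num) hz).2 ?_
    simp only [norm_real, Real.norm_eq_abs, sq_abs, logCoeff_sq, one_pow, mul_one]
    exact (summable_logCoeff_div (by norm_num)).mul_left π
  refine memDirichlet_of_sq_norm_deriv_le differentiableOn_uLog hsum fun z hz => ?_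
  gcongr
  exact norm_deriv_uLog_le hz

theorem norm_deriv_uLog_le_of_re_nonpos (hz : z ∈ unitDisc) (hre : z.re ≤ 0) :
    ‖deriv uLog z‖ ≤ 2 * logCoeff (3 / 4) 0 := by
  have hone_sub : 1 ≤ ‖1 - z‖ := by
    refine le_trans ?_ (re_le_norm (1 - z))
    simpa using hre
  calc ‖deriv uLog z‖ ≤ ‖∑' k, (logCoeff (3 / 4) k : ℂ) * z ^ k‖ := norm_deriv_uLog_le hz
    _ ≤ ‖1 - z‖ * ‖∑' k, (logCoeff (3 / 4) k : ℂ) * z ^ k‖ :=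
      le_mul_of_one_le_left (norm_nonneg _) hone_sub
    _ = ‖(1 - z) * ∑' k, (logCoeff (3 / 4) k : ℂ) * z ^ k‖ := (norm_mul _ _).symm
    _ ≤ 2 * logCoeff (3 / 4) 0 := norm_one_sub_mul_tsum_le_of_antitone
      (antitone_logCoeff (by norm_num)) (logCoeff_nonneg _) (mem_unitDisc.1 hz)

theorem norm_uLog_le_of_re_nonpos (hz : z ∈ unitDisc) (hre : z.re ≤ 0) :
    ‖uLog z‖ ≤ 2 * logCoeff (3 / 4) 0 := by
  have hconvex : Convex ℝ (unitDisc ∩ {w : ℂ | w.re ≤ 0}) :=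
    (convex_ball 0 1).inter (convex_halfSpace_re_le 0)
  have hmvt := hconvex.norm_image_sub_le_of_norm_deriv_le (𝕜 := ℂ)
    (fun w hw => (hasDerivAt_uLog hw.1).differentiableAt)
    (fun w hw => norm_deriv_uLog_le_of_re_nonpos hw.1 hw.2)
    (⟨by simp [mem_unitDisc], by simp⟩ : (0 : ℂ) ∈ unitDisc ∩ {w : ℂ | w.re ≤ 0}) ⟨hz, hre⟩
  have hzero : uLog 0 = 0 := by simp [uLog]
  rw [hzero, sub_zero, sub_zero] at hmvt
  exact hmvt.trans (mul_le_of_le_one_right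
    (mul_nonneg two_pos.le (logCoeff_nonneg _ _)) (mem_unitDisc.1 hz).le)

end ULog

/-! ### The map `phiHalf` -/

section PhiHalf

theorem hasDerivAt_phiHalf (z : ℂ) : HasDerivAt phiHalf (-1 / 2) z :=
  ((hasDerivAt_id z).const_sub 1).div_const 2

theorem differentiable_phiHalf : Differentiable ℂ phiHalf := fun z =>
  (hasDerivAt_phiHalf z).differentiableAt

theorem norm_deriv_phiHalf (z : ℂ) : ‖deriv phiHalf z‖ = 1 / 2 := by
  simp [(hasDerivAt_phiHalf z).deriv]

theorem injective_phiHalf : Function.Injective phiHalf := fun z w h => by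
  simpa [phiHalf] using h

theorem mapsTo_phiHalf : MapsTo phiHalf unitDisc unitDisc := fun z hz => by
  rw [mem_unitDisc] at *
  rw [phiHalf, norm_div, norm_ofNat]
  linarith [norm_sub_le 1 z, norm_one (α := ℂ)]

theorem norm_phiHalf_le_of_re_nonneg {z : ℂ} (hz : z ∈ unitDisc) (hre : 0 ≤ z.re) :
    ‖phiHalf z‖ ≤ 3 / 4 := by
  have hsq : ‖1 - z‖ ^ 2 ≤ 2 := by
    have hz2 : ‖z‖ ^ 2 < 1 := pow_lt_one₀ (norm_nonneg z) (mem_unitDisc.1 hz) two_ne_zero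
    rw [Complex.sq_norm, normSq_apply] at hz2 ⊢
    simp only [sub_re, one_re, sub_im, one_im]
    nlinarith
  rw [phiHalf, norm_div, norm_ofNat]
  nlinarith [norm_nonneg (1 - z)]

end PhiHalf

/-- With `u(z) = Σ_{k≥2} zᵏ/(k (log k)^{3/4})` and `φ(z) = (1−z)/2`, the
function `u` lies in the Dirichlet space and the weighted composition operator
`W_{u,φ}` is bounded on `𝒟`. -/
theorem uLog_memDirichlet_and_wco_bounded :
    MemDirichlet uLog ∧ WCOBounded uLog phiHalf := by
  have hcomp : WCOBounded (fun _ => 1) phiHalf := wcoBounded_one_of_injOn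
    differentiable_phiHalf.differentiableOn mapsTo_phiHalf injective_phiHalf.injOn
  refine ⟨memDirichlet_uLog, memDirichlet_uLog.wcoBounded_of_bounds
    differentiable_phiHalf.differentiableOn hcomp (B := 2 * logCoeff (3 / 4) 0) (ρ := 3 / 4)
    (L := 1 / 2) (by norm_num) fun z hz => ?_⟩
  rcases le_total z.re 0 with hre | hre
  · exact .inl ⟨norm_uLog_le_of_re_nonpos hz hre, norm_deriv_uLog_le_of_re_nonpos hz hre⟩
  · exact .inr ⟨norm_phiHalf_le_of_re_nonneg hz hre, (norm_deriv_phiHalf z).le⟩
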